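/- Let p > 3 be a prime. Then ∑_{k=1}^{(p-1)/2} (p/2 - k)·H_k/((p+1-2k)(p+2k)) ≡ 2·q_p(2) - q_p(2)^2 - 6p·q_p(2) + 2p·q_p(2)^2 + p·q_p(2)^3 + (7/12)·p·B_{p-3} modulo p^2 (as rational numbers). -/

import Mathlib

/-- Two rationals `a` and `b` are congruent modulo `p^r`:
the `p`-adic valuation of `a - b` is at least `r`, i.e. `a - b = c * p^r`
with the denominator of `c` not divisible by `p`. -/
def ratCongr (p r : ℕ) (a b : ℚ) : Prop :=
  ∃ c : ℚ, a - b = c * (p : ℚ) ^ r ∧ ¬ (p ∣ c.den)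

/-- The Fermat quotient `q_p(2) = (2^(p-1) - 1)/p` (an integer for odd primes),
viewed as a rational number. -/
def fermatQ (p : ℕ) : ℚ := ((2 : ℚ) ^ (p - 1) - 1) / p

/-!
Let `p = 2n + 1`. Partial fractions in `k` split the summand into multiples of `H_k / (p + 2k)`,
which carries a factor `p`, and of `H_k / (n + 1 - k)`. The first sum is only needed modulo `p`,
where it becomes `(1/2) ∑ H_k / k`, the symmetric sum `(H_n² + H_n^{(2)}) / 4`. The second one is
exactly a convolution, and equals `H_{n+1}² - H_{n+1}^{(2)}`.

The values of `H_n` and `H_n^{(2)}` modulo `p²` come from pairing the integers of `[1, p - 1]` in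
two ways, as `{j, p - j}` and as `{2j, p - 2j}` with `1 ≤ j ≤ n`. Applied to `∑ k^m`, with
`∑_{k < p} k^m ≡ p B_m` as the third ingredient, the two pairings determine `H_n^{(3)}` modulo `p`
and then `H_n^{(2)}` modulo `p²`. Applied to `(p - 1)!`, they give
`∏ (1 - p/j) = 2^{p-1} ∏ (1 - p/(2j))`, and expanding both products modulo `p³` yields `H_n`.
-/

open Finset

/-- The localization `ℤ_(p)`: the rational numbers whose denominator is not divisible by `p`,
encoded as the valuation ring of the `p`-adic valuation on `ℚ`. -/
abbrev pIntegers (p : ℕ) [Fact p.Prime] : Subring ℚ := (Rat.padicValuation p).integer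

section pIntegers

variable {p : ℕ} [Fact p.Prime]

lemma zpow_mem_pIntegers {x : ℚ} (hx : Rat.padicValuation p x = 1) (m : ℤ) :
    x ^ m ∈ pIntegers p := by
  rw [Valuation.mem_integer_iff, map_zpow₀, hx, one_zpow]

lemma padicValuation_natCast_eq_one {k : ℕ} (hk : ¬ p ∣ k) : Rat.padicValuation p (k : ℚ) = 1 := by
  rw [← Int.cast_natCast, Rat.padicValuation_cast, Int.padicValuation_eq_one_iff]
  exact_mod_cast hk

lemma natCast_zpow_mem_pIntegers {k : ℕ} (hk : ¬ p ∣ k) (m : ℤ) : (k : ℚ) ^ m ∈ pIntegers p :=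
  zpow_mem_pIntegers (padicValuation_natCast_eq_one hk) m

lemma natCast_inv_mem_pIntegers {k : ℕ} (hk : ¬ p ∣ k) : (k : ℚ)⁻¹ ∈ pIntegers p := by
  simpa only [zpow_neg_one] using natCast_zpow_mem_pIntegers hk (-1)

lemma two_inv_mem_pIntegers (hp2 : 2 < p) : (2⁻¹ : ℚ) ∈ pIntegers p :=
  mod_cast natCast_inv_mem_pIntegers (Nat.not_dvd_of_pos_of_lt two_pos hp2)

lemma padicValuation_one_add_mul {z : ℚ} (hz : z ∈ pIntegers p) :
    Rat.padicValuation p (1 + p * z) = 1 := by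
  have hp : Rat.padicValuation p (p : ℚ) < 1 := by
    rw [← Int.cast_natCast, Rat.padicValuation_cast, Int.padicValuation_lt_one_iff]
  refine Valuation.map_one_add_of_lt _ ?_
  rw [map_mul]
  exact (mul_le_of_le_one_right' hz).trans_lt hp

lemma one_add_mul_ne_zero {z : ℚ} (hz : z ∈ pIntegers p) : 1 + p * z ≠ 0 :=
  (Valuation.ne_zero_iff _).1 (padicValuation_one_add_mul hz ▸ one_ne_zero)

lemma inv_one_add_mul_mem_pIntegers {z : ℚ} (hz : z ∈ pIntegers p) :
    (1 + p * z)⁻¹ ∈ pIntegers p :=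
  zpow_neg_one (1 + p * z) ▸ zpow_mem_pIntegers (padicValuation_one_add_mul hz) (-1)

end pIntegers

namespace ratCongr

variable {p r s : ℕ} {a b c d : ℚ}

lemma of_sub_eq (h : ratCongr p r a b) (e : c - d = a - b) : ratCongr p r c d := by
  unfold ratCongr
  rwa [e]

protected lemma symm (h : ratCongr p r a b) : ratCongr p r b a := by
  obtain ⟨c, e, hc⟩ := h
  exact ⟨-c, by linear_combination -e, by rwa [Rat.neg_den]⟩

variable [Fact p.Prime]

lemma iff_exists_mem_pIntegers :
    ratCongr p r a b ↔ ∃ c ∈ pIntegers p, a - b = c * (p : ℚ) ^ r := by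
  simp only [ratCongr, Valuation.mem_integer_iff, Rat.padicValuation_le_one_iff, and_comm]

lemma mul_pow_zero (hc : c ∈ pIntegers p) (r : ℕ) : ratCongr p r (c * p ^ r) 0 :=
  iff_exists_mem_pIntegers.2 ⟨c, hc, sub_zero _⟩

protected lemma refl (a : ℚ) : ratCongr p r a a :=
  iff_exists_mem_pIntegers.2 ⟨0, zero_mem _, by ring⟩

protected lemma add (h : ratCongr p r a b) (h' : ratCongr p r c d) :
    ratCongr p r (a + c) (b + d) := by
  obtain ⟨x, hx, e⟩ := iff_exists_mem_pIntegers.1 h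
  obtain ⟨y, hy, e'⟩ := iff_exists_mem_pIntegers.1 h'
  exact iff_exists_mem_pIntegers.2 ⟨x + y, add_mem hx hy, by linear_combination e + e'⟩

protected lemma trans (h : ratCongr p r a b) (h' : ratCongr p r b c) : ratCongr p r a c :=
  (h.add h').of_sub_eq (by ring)

lemma add_natCast_mul (a : ℚ) (hc : c ∈ pIntegers p) : ratCongr p 1 (a + p * c) a :=
  iff_exists_mem_pIntegers.2 ⟨c, hc, by ring⟩

lemma const_mul (hc : c ∈ pIntegers p) (h : ratCongr p r a b) : ratCongr p r (c * a) (c * b) := by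
  obtain ⟨x, hx, e⟩ := iff_exists_mem_pIntegers.1 h
  exact iff_exists_mem_pIntegers.2 ⟨c * x, mul_mem hc hx, by linear_combination c * e⟩

protected lemma sub (h : ratCongr p r a b) (h' : ratCongr p r c d) :
    ratCongr p r (a - c) (b - d) :=
  (h.add (h'.const_mul (neg_mem (one_mem _)))).of_sub_eq (by ring)

protected lemma mul (h : ratCongr p r a b) (h' : ratCongr p r c d) (hb : b ∈ pIntegers p)
    (hc : c ∈ pIntegers p) : ratCongr p r (a * c) (b * d) :=
  ((h.const_mul hc).add (h'.const_mul hb)).of_sub_eq (by ring)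

protected lemma sum {ι : Type*} {s : Finset ι} {f g : ι → ℚ}
    (h : ∀ i ∈ s, ratCongr p r (f i) (g i)) : ratCongr p r (∑ i ∈ s, f i) (∑ i ∈ s, g i) := by
  classical
  induction s using Finset.induction_on with
  | empty => exact .refl _
  | insert i s hi ih =>
    rw [sum_insert hi, sum_insert hi]
    exact (h i (mem_insert_self i s)).add (ih fun j hj => h j (mem_insert_of_mem hj))

lemma mem_pIntegers (h : ratCongr p r a b) (hb : b ∈ pIntegers p) : a ∈ pIntegers p := by
  obtain ⟨c, hc, e⟩ := iff_exists_mem_pIntegers.1 h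
  rw [eq_add_of_sub_eq e]
  exact add_mem (mul_mem hc (pow_mem (natCast_mem _ _) _)) hb

lemma of_le (hsr : s ≤ r) (h : ratCongr p r a b) : ratCongr p s a b := by
  obtain ⟨c, hc, e⟩ := iff_exists_mem_pIntegers.1 h
  refine iff_exists_mem_pIntegers.2
    ⟨c * p ^ (r - s), mul_mem hc (pow_mem (natCast_mem _ _) _), ?_⟩
  rw [e, mul_assoc, ← pow_add, Nat.sub_add_cancel hsr]

lemma natCast_mul_iff : ratCongr p (r + 1) (p * a) (p * b) ↔ ratCongr p r a b := by
  have h0 : (p : ℚ) ≠ 0 := Nat.cast_ne_zero.2 (Fact.out : p.Prime).ne_zero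
  simp only [iff_exists_mem_pIntegers, ← mul_sub, pow_succ', mul_left_comm _ (p : ℚ),
    mul_right_inj' h0]

lemma of_natCast_mul {k : ℕ} (hk : ¬ p ∣ k) (h : ratCongr p r (k * a) (k * b)) :
    ratCongr p r a b := by
  have h0 : (k : ℚ) ≠ 0 := Nat.cast_ne_zero.2 fun e => hk (e ▸ dvd_zero p)
  simpa only [inv_mul_cancel_left₀ h0] using h.const_mul (natCast_inv_mem_pIntegers hk)

end ratCongr

section Congruences

variable {p : ℕ} [Fact p.Prime]

lemma inv_one_add_mul_congr {z : ℚ} (hz : z ∈ pIntegers p) :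
    ratCongr p 2 (1 + p * z)⁻¹ (1 - p * z) := by
  have h0 : 1 + p * z ≠ 0 := one_add_mul_ne_zero hz
  refine (ratCongr.mul_pow_zero
    (mul_mem (mul_mem hz hz) (inv_one_add_mul_mem_pIntegers hz)) 2).of_sub_eq ?_
  field_simp
  ring

lemma natCast_add_inv_congr {k : ℕ} (hk : ¬ p ∣ k) :
    ratCongr p 1 ((p : ℚ) + k)⁻¹ (k : ℚ)⁻¹ := by
  have hadd : ((p : ℚ) + k)⁻¹ ∈ pIntegers p :=
    mod_cast natCast_inv_mem_pIntegers (mt (Nat.dvd_add_right dvd_rfl).1 hk)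
  have hc := mul_mem hadd (natCast_inv_mem_pIntegers hk)
  have hk0 : (k : ℚ) ≠ 0 := Nat.cast_ne_zero.2 fun h => hk (h ▸ dvd_zero p)
  have hpk0 : (p : ℚ) + k ≠ 0 := by positivity
  refine (ratCongr.mul_pow_zero (neg_mem hc) 1).of_sub_eq ?_
  field_simp
  ring

lemma one_add_mul_zpow_congr {z : ℚ} (hz : z ∈ pIntegers p) (m : ℤ) :
    ratCongr p 2 ((1 + p * z) ^ m) (1 + m * (p * z)) := by
  have h0 : 1 + p * z ≠ 0 := one_add_mul_ne_zero hz
  have hpz : p * z ∈ pIntegers p := mul_mem (natCast_mem _ _) hz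
  have hlinear (k : ℤ) : 1 + k * (p * z) ∈ pIntegers p :=
    add_mem (one_mem _) (mul_mem (intCast_mem _ k) hpz)
  have herror (k : ℤ) : k * (z * z) ∈ pIntegers p := mul_mem (intCast_mem _ k) (mul_mem hz hz)
  induction m using Int.induction_on with
  | zero => simpa using ratCongr.refl 1
  | succ m ih =>
    rw [zpow_add_one₀ h0]
    refine ((ih.mul (.refl _) (hlinear m) (add_mem (one_mem _) hpz)).add
      (ratCongr.mul_pow_zero (herror m) 2)).of_sub_eq ?_
    push_cast
    ring
  | pred m ih =>
    rw [zpow_sub_one₀ h0]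
    refine ((ih.mul (inv_one_add_mul_congr hz) (hlinear _)
      (inv_one_add_mul_mem_pIntegers hz)).add (ratCongr.mul_pow_zero (herror m) 2)).of_sub_eq ?_
    push_cast
    ring

lemma natCast_sub_zpow_congr {a : ℕ} (ha : ¬ p ∣ a) {m : ℤ} (hm : Even m) :
    ratCongr p 2 (((p : ℚ) - a) ^ m) ((a : ℚ) ^ m - m * p * (a : ℚ) ^ (m - 1)) := by
  have h0 : (a : ℚ) ≠ 0 := Nat.cast_ne_zero.2 fun h => ha (h ▸ dvd_zero p)
  have hfactor : (p : ℚ) - a = -a * (1 + p * -(a : ℚ)⁻¹) := by field_simp; ring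
  rw [hfactor, mul_zpow, hm.neg_zpow]
  refine ((one_add_mul_zpow_congr (neg_mem (natCast_inv_mem_pIntegers ha)) m).const_mul
    (natCast_zpow_mem_pIntegers ha m)).of_sub_eq ?_
  rw [zpow_sub_one₀ h0]
  ring

lemma natCast_pow_pred_congr_one {a : ℕ} (ha : ¬ p ∣ a) : ratCongr p 1 ((a : ℚ) ^ (p - 1)) 1 := by
  have hp : p.Prime := Fact.out
  have hcop : IsCoprime (a : ℤ) p :=
    Nat.isCoprime_iff_coprime.2 ((hp.coprime_iff_not_dvd.2 ha).symm)
  obtain ⟨t, ht⟩ := (Int.ModEq.pow_card_sub_one_eq_one hp hcop).symm.dvd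
  refine ratCongr.iff_exists_mem_pIntegers.2 ⟨t, intCast_mem _ t, ?_⟩
  rw [pow_one, mul_comm]
  exact_mod_cast ht

lemma natCast_zpow_add_pred_congr {a : ℕ} (ha : ¬ p ∣ a) (m : ℤ) :
    ratCongr p 1 ((a : ℚ) ^ (m + (p - 1 : ℕ))) ((a : ℚ) ^ m) := by
  have h0 : (a : ℚ) ≠ 0 := Nat.cast_ne_zero.2 fun h => ha (h ▸ dvd_zero p)
  rw [zpow_add₀ h0, zpow_natCast]
  simpa only [mul_one] using
    (natCast_pow_pred_congr_one ha).const_mul (natCast_zpow_mem_pIntegers ha m)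

lemma two_pow_pred_eq_fermatQ : (2 : ℚ) ^ (p - 1) = 1 + p * fermatQ p := by
  have h0 : (p : ℚ) ≠ 0 := Nat.cast_ne_zero.2 (Fact.out : p.Prime).ne_zero
  rw [fermatQ]
  field_simp
  ring

lemma fermatQ_mem_pIntegers (hp2 : 2 < p) : fermatQ p ∈ pIntegers p := by
  have h := natCast_pow_pred_congr_one (Nat.not_dvd_of_pos_of_lt two_pos hp2)
  rw [Nat.cast_ofNat, two_pow_pred_eq_fermatQ] at h
  have h : ratCongr p (0 + 1) (p * fermatQ p) (p * 0) := h.of_sub_eq (by ring)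
  exact (ratCongr.natCast_mul_iff.1 h).mem_pIntegers (zero_mem _)

end Congruences

section Bernoulli

variable {p n : ℕ} [Fact p.Prime]

lemma bernoulli'_mem_pIntegers (hn : n + 1 < p) : bernoulli' n ∈ pIntegers p := by
  induction n using Nat.strong_induction_on with
  | _ n ih =>
    rw [bernoulli'_def]
    refine sub_mem (one_mem _) (sum_mem fun k hk => ?_)
    have hk := mem_range.1 hk
    rw [div_eq_mul_inv]
    refine mul_mem (mul_mem (natCast_mem _ _) ?_) (ih k hk (by omega))
    rw [← Nat.cast_sub hk.le]
    exact_mod_cast natCast_inv_mem_pIntegers (p := p) (k := n - k + 1)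
      (Nat.not_dvd_of_pos_of_lt (by omega) (by omega))

lemma bernoulli_mem_pIntegers (hn : n + 1 < p) : bernoulli n ∈ pIntegers p :=
  mul_mem (pow_mem (neg_mem (one_mem _)) _) (bernoulli'_mem_pIntegers hn)

lemma sum_range_pow_congr (hn : n + 1 < p) :
    ratCongr p 2 (∑ k ∈ range p, (k : ℚ) ^ n) (p * bernoulli n) := by
  have hn0 : (n : ℚ) + 1 ≠ 0 := by positivity
  have hinv : ((n : ℚ) + 1)⁻¹ ∈ pIntegers p := by
    exact_mod_cast natCast_inv_mem_pIntegers (Nat.not_dvd_of_pos_of_lt n.succ_pos hn)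
  have hlast : bernoulli n * ((n + 1).choose n) * (p : ℚ) ^ (n + 1 - n) / (n + 1) =
      p * bernoulli n := by
    rw [Nat.choose_succ_self_right, Nat.add_sub_cancel_left]
    push_cast
    field_simp
  have hlow : ratCongr p 2 (∑ i ∈ range n,
      bernoulli i * ((n + 1).choose i) * (p : ℚ) ^ (n + 1 - i) / (n + 1)) (∑ _i ∈ range n, 0) := by
    refine .sum fun i hi => ?_
    have hi := mem_range.1 hi
    have hc : bernoulli i * ((n + 1).choose i) * (p : ℚ) ^ (n - 1 - i) * ((n : ℚ) + 1)⁻¹ ∈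
        pIntegers p :=
      mul_mem (mul_mem (mul_mem (bernoulli_mem_pIntegers (by omega)) (natCast_mem _ _))
        (pow_mem (natCast_mem _ _) _)) hinv
    refine (ratCongr.mul_pow_zero hc 2).of_sub_eq ?_
    rw [show n + 1 - i = n - 1 - i + 2 by omega, pow_add]
    ring
  rw [sum_range_pow, sum_range_succ, hlast]
  exact hlow.of_sub_eq (by simp)

end Bernoulli

section Splitting

variable {M : Type*} [CommMonoid M]

@[to_additive]
lemma prod_Icc_pair_reflect (f : ℕ → M) (n : ℕ) :
    ∏ k ∈ Icc 1 (2 * n), f k = ∏ j ∈ Icc 1 n, f j * f (2 * n + 1 - j) := by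
  rw [← prod_filter_mul_prod_filter_not _ (· ≤ n), prod_mul_distrib]
  congr 1
  · refine prod_congr ?_ fun _ _ => rfl
    ext k
    simp only [mem_filter, mem_Icc]
    omega
  · refine prod_nbij' (2 * n + 1 - ·) (2 * n + 1 - ·) ?_ ?_ ?_ ?_ fun k hk => congrArg f ?_
    all_goals
      simp only [mem_filter, mem_Icc] at *
      omega

@[to_additive]
lemma prod_Icc_pair_even_odd (f : ℕ → M) (n : ℕ) :
    ∏ k ∈ Icc 1 (2 * n), f k = ∏ j ∈ Icc 1 n, f (2 * j) * f (2 * n + 1 - 2 * j) := by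
  rw [← prod_filter_mul_prod_filter_not _ Even, prod_mul_distrib]
  congr 1
  · refine prod_nbij' (· / 2) (2 * ·) ?_ ?_ ?_ ?_ fun k hk => congrArg f ?_
    all_goals
      simp only [mem_filter, mem_Icc, Nat.even_iff] at *
      omega
  · refine prod_nbij' (fun k => (2 * n + 1 - k) / 2) (2 * n + 1 - 2 * ·) ?_ ?_ ?_ ?_
      fun k hk => congrArg f ?_
    all_goals
      simp only [mem_filter, mem_Icc, Nat.even_iff] at *
      omega

end Splitting

/-- The power sum `∑_{k=1}^N k^m`. The exponent is an integer, so that `powSum (-s) N` is the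
generalized harmonic number `H_N^{(s)}`. -/
def powSum (m : ℤ) (N : ℕ) : ℚ := ∑ k ∈ Icc 1 N, (k : ℚ) ^ m

section PowSum

lemma powSum_succ (m : ℤ) (N : ℕ) : powSum m (N + 1) = powSum m N + ((N : ℚ) + 1) ^ m := by
  rw [powSum, powSum, sum_Icc_succ_top (Nat.le_add_left 1 N), Nat.cast_add_one]

variable {p n : ℕ} [Fact p.Prime]

lemma powSum_mem_pIntegers (m : ℤ) (hn : n < p) : powSum m n ∈ pIntegers p :=
  sum_mem fun k hk => by
    obtain ⟨hk1, hkn⟩ := mem_Icc.1 hk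
    exact natCast_zpow_mem_pIntegers (Nat.not_dvd_of_pos_of_lt hk1 (by omega)) m

lemma harmonic_mem_pIntegers (hn : n < p) : harmonic n ∈ pIntegers p := by
  simpa only [powSum, zpow_neg_one, ← harmonic_eq_sum_Icc] using powSum_mem_pIntegers (-1) hn

lemma powSum_add_pred_congr (m : ℤ) (hn : n < p) :
    ratCongr p 1 (powSum (m + (p - 1 : ℕ)) n) (powSum m n) :=
  .sum fun k hk => by
    obtain ⟨hk1, hkn⟩ := mem_Icc.1 hk
    exact natCast_zpow_add_pred_congr (Nat.not_dvd_of_pos_of_lt hk1 (by omega)) m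

lemma powSum_natCast_congr_bernoulli (hn0 : n ≠ 0) (hn : n + 1 < p) :
    ratCongr p 2 (powSum n (p - 1)) (p * bernoulli n) := by
  have hp : 0 < p := by omega
  have h := sum_range_pow_congr hn
  rw [sum_range_eq_add_Ico _ hp, Nat.cast_zero, zero_pow hn0, zero_add] at h
  rw [powSum, Icc_sub_one_right_eq_Ico_of_not_isMin (by simpa using hp.ne')]
  simpa only [zpow_natCast] using h

lemma powSum_two_mul_congr_reflect (hpn : p = 2 * n + 1) {m : ℤ} (hm : Even m) :
    ratCongr p 2 (powSum m (2 * n)) (2 * powSum m n - m * p * powSum (m - 1) n) := by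
  simp only [powSum, mul_sum, ← sum_sub_distrib]
  rw [sum_Icc_pair_reflect, ← hpn]
  refine .sum fun j hj => ?_
  obtain ⟨hj1, hjn⟩ := mem_Icc.1 hj
  have hjp : ¬ p ∣ j := Nat.not_dvd_of_pos_of_lt hj1 (by omega)
  rw [Nat.cast_sub (by omega : j ≤ p)]
  exact ((natCast_sub_zpow_congr hjp hm).add (.refl ((j : ℚ) ^ m))).of_sub_eq (by ring)

lemma powSum_two_mul_congr_even_odd (hpn : p = 2 * n + 1) {m : ℤ} (hm : Even m) :
    ratCongr p 2 (powSum m (2 * n))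
      (2 * 2 ^ m * powSum m n - m * p * 2 ^ (m - 1) * powSum (m - 1) n) := by
  simp only [powSum, mul_sum, ← sum_sub_distrib]
  rw [sum_Icc_pair_even_odd, ← hpn]
  refine .sum fun j hj => ?_
  obtain ⟨hj1, hjn⟩ := mem_Icc.1 hj
  have hjp : ¬ p ∣ 2 * j := Nat.not_dvd_of_pos_of_lt (by omega) (by omega)
  rw [Nat.cast_sub (by omega : 2 * j ≤ p)]
  refine ((natCast_sub_zpow_congr hjp hm).add (.refl (((2 * j : ℕ) : ℚ) ^ m))).of_sub_eq ?_
  push_cast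
  rw [mul_zpow, mul_zpow]
  ring

lemma one_sub_two_zpow_mul_powSum_congr (hpn : p = 2 * n + 1) {m : ℤ} (hm : Even m) :
    ratCongr p 2 ((1 - 2 ^ m) * powSum m (2 * n))
      (p * (m * 2 ^ (m - 1) * powSum (m - 1) n)) := by
  have h2 : (2 : ℚ) ^ m ∈ pIntegers p := by
    have hp2 : 2 < p := by
      have := (Fact.out : p.Prime).two_le
      omega
    exact_mod_cast natCast_zpow_mem_pIntegers (Nat.not_dvd_of_pos_of_lt two_pos hp2) m
  refine ((powSum_two_mul_congr_even_odd hpn hm).sub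
    ((powSum_two_mul_congr_reflect hpn hm).const_mul h2)).of_sub_eq ?_
  rw [zpow_sub_one₀ two_ne_zero]
  ring

lemma one_sub_two_zpow_mul_bernoulli_congr (hpn : p = 2 * n + 1) {m : ℕ} (hm : Even m)
    (hm0 : m ≠ 0) (hmp : m + 1 < p) :
    ratCongr p 1 ((1 - 2 ^ (m : ℤ)) * bernoulli m) (m * 2 ^ (m - 1 : ℤ) * powSum (m - 1) n) := by
  rw [← ratCongr.natCast_mul_iff, mul_left_comm]
  have h2 : 1 - 2 ^ (m : ℤ) ∈ pIntegers p :=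
    sub_mem (one_mem _) (zpow_natCast (2 : ℚ) m ▸ pow_mem (ofNat_mem _ 2) m)
  have hfull := powSum_natCast_congr_bernoulli hm0 hmp
  rw [show p - 1 = 2 * n by omega] at hfull
  exact (hfull.symm.const_mul h2).trans
    (mod_cast one_sub_two_zpow_mul_powSum_congr hpn ((Int.even_coe_nat m).2 hm))

lemma powSum_neg_three_congr (hpn : p = 2 * n + 1) (hp3 : 3 < p) :
    ratCongr p 1 (powSum (-3) n) (-2 * bernoulli (p - 3)) := by
  have h2 : ¬ p ∣ 2 := Nat.not_dvd_of_pos_of_lt two_pos (by omega)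
  have two_zpow_mem (k : ℤ) : (2 : ℚ) ^ k ∈ pIntegers p :=
    mod_cast natCast_zpow_mem_pIntegers h2 k
  have two_zpow_congr (k : ℤ) : ratCongr p 1 (2 ^ (k + (p - 1 : ℕ))) (2 ^ k) :=
    mod_cast natCast_zpow_add_pred_congr h2 k
  have hm : ((p - 3 : ℕ) : ℤ) = -2 + (p - 1 : ℕ) := by omega
  have hm1 : ((p - 3 : ℕ) : ℤ) - 1 = -3 + (p - 1 : ℕ) := by omega
  have hcast : ratCongr p 1 ((p - 3 : ℕ) : ℚ) (-3) := by
    refine (ratCongr.add_natCast_mul (-3) (one_mem _)).of_sub_eq ?_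
    rw [Nat.cast_sub hp3.le, Nat.cast_ofNat]
    ring
  have hbernoulli := one_sub_two_zpow_mul_bernoulli_congr hpn (m := p - 3)
    ⟨n - 1, by omega⟩ (by omega) (by omega)
  rw [hm1, hm] at hbernoulli
  have hleft := (two_zpow_congr (-2)).const_mul
    (neg_mem (bernoulli_mem_pIntegers (n := p - 3) (by omega)))
  have h3mem : (-3 : ℚ) ∈ pIntegers p := neg_mem (ofNat_mem _ 3)
  have hright := (hcast.mul (two_zpow_congr (-3)) h3mem (two_zpow_mem _)).mul
    (powSum_add_pred_congr (-3) (by omega : n < p)) (mul_mem h3mem (two_zpow_mem _))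
    (powSum_mem_pIntegers _ (by omega))
  refine .of_natCast_mul (Nat.not_dvd_of_pos_of_lt three_pos hp3) ?_
  refine (((hleft.symm.add hbernoulli).add hright).const_mul (ofNat_mem _ 8)).of_sub_eq ?_
  push_cast [zpow_neg, zpow_ofNat]
  ring

lemma powSum_neg_two_congr (hpn : p = 2 * n + 1) (hp3 : 3 < p) :
    ratCongr p 2 (powSum (-2) n) (7 / 3 * p * bernoulli (p - 3)) := by
  have h6 : ¬ p ∣ 6 := by
    rw [show 6 = 2 * 3 by rfl, (Fact.out : p.Prime).dvd_mul]
    exact not_or.2 ⟨Nat.not_dvd_of_pos_of_lt two_pos (by omega),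
      Nat.not_dvd_of_pos_of_lt three_pos hp3⟩
  have hfull := one_sub_two_zpow_mul_powSum_congr hpn (m := -2) (by decide)
  have hreflect := powSum_two_mul_congr_reflect hpn (m := -2) (by decide)
  rw [show (-2 - 1 : ℤ) = -3 by rfl] at hfull hreflect
  have hcubes := ratCongr.natCast_mul_iff.2 (powSum_neg_three_congr hpn hp3)
  refine .of_natCast_mul h6 ?_
  refine (((hfull.const_mul (ofNat_mem _ 4)).sub (hreflect.const_mul (ofNat_mem _ 3))).sub
    (hcubes.const_mul (ofNat_mem _ 7))).of_sub_eq ?_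
  push_cast [zpow_neg, zpow_ofNat]
  ring

lemma powSum_neg_two_congr_zero (hpn : p = 2 * n + 1) (hp3 : 3 < p) :
    ratCongr p 1 (powSum (-2) n) 0 := by
  have hB : 7 * bernoulli (p - 3) ∈ pIntegers p :=
    mul_mem (ofNat_mem _ 7) (bernoulli_mem_pIntegers (by omega))
  refine .of_natCast_mul (Nat.not_dvd_of_pos_of_lt three_pos hp3) ?_
  refine ((((powSum_neg_two_congr hpn hp3).of_le one_le_two).const_mul (ofNat_mem _ 3)).add
    (ratCongr.add_natCast_mul 0 hB)).of_sub_eq ?_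
  push_cast
  ring

end PowSum

section HalfProduct

lemma prod_one_sub_mul_inv_eq (K : Type*) [Field K] [CharZero K] (n : ℕ) :
    ∏ j ∈ Icc 1 n, (1 - (2 * n + 1) * (j : K)⁻¹) =
      4 ^ n * ∏ j ∈ Icc 1 n, (1 - (2 * n + 1) * (2 * (j : K))⁻¹) := by
  have hne : ∏ j ∈ Icc 1 n, -(j : K) ^ 2 ≠ 0 := prod_ne_zero_iff.2 fun j hj =>
    neg_ne_zero.2 (pow_ne_zero 2 (Nat.cast_ne_zero.2 (Nat.pos_iff_ne_zero.1 (mem_Icc.1 hj).1)))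
  have hfour : (4 : K) ^ n = ∏ _j ∈ Icc 1 n, 4 := by
    rw [prod_const, Nat.card_Icc, Nat.add_sub_cancel]
  refine mul_left_cancel₀ hne ?_
  rw [hfour, ← prod_mul_distrib, ← prod_mul_distrib, ← prod_mul_distrib]
  calc ∏ j ∈ Icc 1 n, -(j : K) ^ 2 * (1 - (2 * n + 1) * (j : K)⁻¹)
      = ∏ j ∈ Icc 1 n, (j : K) * (2 * n + 1 - j : ℕ) := prod_congr rfl fun j hj => by
        obtain ⟨hj1, hjn⟩ := mem_Icc.1 hj
        have hj0 : (j : K) ≠ 0 := Nat.cast_ne_zero.2 (by omega)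
        rw [Nat.cast_sub (by omega)]
        push_cast
        field_simp
        ring
    _ = ∏ j ∈ Icc 1 n, ((2 * j : ℕ) : K) * (2 * n + 1 - 2 * j : ℕ) := by
        rw [← prod_Icc_pair_reflect (fun k => (k : K)), prod_Icc_pair_even_odd]
    _ = _ := prod_congr rfl fun j hj => by
        obtain ⟨hj1, hjn⟩ := mem_Icc.1 hj
        have hj0 : (j : K) ≠ 0 := Nat.cast_ne_zero.2 (by omega)
        rw [Nat.cast_sub (by omega)]
        push_cast
        field_simp
        ring

variable {p n : ℕ} [Fact p.Prime]

lemma prod_one_sub_mul_congr {ι : Type*} {s : Finset ι} {x : ι → ℚ} (hp2 : 2 < p)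
    (hx : ∀ i ∈ s, x i ∈ pIntegers p) :
    ratCongr p 3 (∏ i ∈ s, (1 - p * x i))
      (1 - p * ∑ i ∈ s, x i + p ^ 2 * (((∑ i ∈ s, x i) ^ 2 - ∑ i ∈ s, x i ^ 2) * 2⁻¹)) := by
  classical
  have h2 := two_inv_mem_pIntegers hp2
  induction s using Finset.induction_on with
  | empty => exact (ratCongr.refl 1).of_sub_eq (by simp)
  | insert i s hi ih =>
    have hxi := hx i (mem_insert_self i s)
    have hxs : ∀ j ∈ s, x j ∈ pIntegers p := fun j hj => hx j (mem_insert_of_mem hj)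
    have hquad : ((∑ j ∈ s, x j) ^ 2 - ∑ j ∈ s, x j ^ 2) * 2⁻¹ ∈ pIntegers p :=
      mul_mem (sub_mem (pow_mem (sum_mem hxs) 2) (sum_mem fun j hj => pow_mem (hxs j hj) 2)) h2
    rw [prod_insert hi, sum_insert hi, sum_insert hi]
    refine ((ih hxs).const_mul (sub_mem (one_mem _) (mul_mem (natCast_mem _ _) hxi))).trans ?_
    refine (ratCongr.mul_pow_zero (mul_mem (neg_mem hxi) hquad) 3).of_sub_eq ?_
    ring

lemma prod_one_sub_mul_inv_congr {c : ℚ} (hc : c ∈ pIntegers p) (hn : n < p) (hp2 : 2 < p) :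
    ratCongr p 3 (∏ j ∈ Icc 1 n, (1 - p * (c * (j : ℚ)⁻¹))) (1 - p * (c * harmonic n) +
      p ^ 2 * (c ^ 2 * (harmonic n ^ 2 - powSum (-2) n) * 2⁻¹)) := by
  have hinv (j : ℕ) (hj : j ∈ Icc 1 n) : c * (j : ℚ)⁻¹ ∈ pIntegers p := by
    obtain ⟨hj1, hjn⟩ := mem_Icc.1 hj
    exact mul_mem hc (natCast_inv_mem_pIntegers (Nat.not_dvd_of_pos_of_lt hj1 (by omega)))
  have hsq : ∑ j ∈ Icc 1 n, ((j : ℚ)⁻¹) ^ 2 = powSum (-2) n :=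
    sum_congr rfl fun j _ => by rw [inv_pow, zpow_neg, zpow_ofNat]
  simpa only [mul_pow, ← mul_sum, ← harmonic_eq_sum_Icc, hsq, ← mul_sub] using
    prod_one_sub_mul_congr hp2 hinv

lemma prod_one_sub_mul_inv_eq_fermatQ (hpn : p = 2 * n + 1) :
    ∏ j ∈ Icc 1 n, (1 - p * (1 * (j : ℚ)⁻¹)) =
      (1 + p * fermatQ p) * ∏ j ∈ Icc 1 n, (1 - p * (2⁻¹ * (j : ℚ)⁻¹)) := by
  have hcast : (p : ℚ) = 2 * n + 1 := mod_cast hpn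
  have hfour : (2 : ℚ) ^ (p - 1) = 4 ^ n := by
    rw [hpn, Nat.add_sub_cancel, pow_mul]
    norm_num
  rw [← two_pow_pred_eq_fermatQ, hfour, hcast]
  simp only [one_mul, prod_one_sub_mul_inv_eq, mul_inv]

lemma harmonic_congr_quadratic (hpn : p = 2 * n + 1) (hp2 : 2 < p) :
    ratCongr p 2 (harmonic n) (-2 * fermatQ p +
      p * (fermatQ p * harmonic n + 3 * 2⁻¹ ^ 2 * (harmonic n ^ 2 - powSum (-2) n))) := by
  have hn : n < p := by omega
  have hq : fermatQ p ∈ pIntegers p := fermatQ_mem_pIntegers hp2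
  have h2 : (2⁻¹ : ℚ) ∈ pIntegers p := two_inv_mem_pIntegers hp2
  have hfull := prod_one_sub_mul_inv_congr (one_mem _) hn hp2
  have hpq : 1 + p * fermatQ p ∈ pIntegers p := add_mem (one_mem _) (mul_mem (natCast_mem _ _) hq)
  have hhalf := (prod_one_sub_mul_inv_congr h2 hn hp2).const_mul hpq
  rw [← prod_one_sub_mul_inv_eq_fermatQ hpn] at hhalf
  have herror : fermatQ p * ((harmonic n ^ 2 - powSum (-2) n) * 2⁻¹ ^ 2) ∈ pIntegers p :=
    mul_mem hq (mul_mem (sub_mem (pow_mem (harmonic_mem_pIntegers hn) 2)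
      (powSum_mem_pIntegers (-2) hn)) (pow_mem h2 2))
  refine ratCongr.natCast_mul_iff.1 ?_
  refine (((hhalf.symm.trans hfull).const_mul (ofNat_mem _ 2)).add
    (ratCongr.mul_pow_zero (neg_mem herror) 3)).of_sub_eq ?_
  ring

lemma harmonic_congr_neg_two_mul_fermatQ (hpn : p = 2 * n + 1) (hp2 : 2 < p) :
    ratCongr p 1 (harmonic n) (-2 * fermatQ p) := by
  have hn : n < p := by omega
  have hH : harmonic n ∈ pIntegers p := harmonic_mem_pIntegers hn
  refine ((harmonic_congr_quadratic hpn hp2).of_le one_le_two).trans (.add_natCast_mul _ ?_)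
  refine add_mem (mul_mem (fermatQ_mem_pIntegers hp2) hH) ?_
  exact mul_mem (mul_mem (ofNat_mem _ 3) (pow_mem (two_inv_mem_pIntegers hp2) 2))
    (sub_mem (pow_mem hH 2) (powSum_mem_pIntegers (-2) hn))

lemma harmonic_congr (hpn : p = 2 * n + 1) (hp3 : 3 < p) :
    ratCongr p 2 (harmonic n) (-2 * fermatQ p + p * fermatQ p ^ 2) := by
  have hp2 : 2 < p := by omega
  have hq : fermatQ p ∈ pIntegers p := fermatQ_mem_pIntegers hp2
  have hH : harmonic n ∈ pIntegers p := harmonic_mem_pIntegers (by omega)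
  have hmod := harmonic_congr_neg_two_mul_fermatQ hpn hp2
  have hbracket : ratCongr p 1
      (fermatQ p * harmonic n + 3 * 2⁻¹ ^ 2 * (harmonic n ^ 2 - powSum (-2) n))
      (fermatQ p ^ 2) := by
    have hsq := hmod.mul hmod (mul_mem (neg_mem (ofNat_mem _ 2)) hq) hH
    refine ((hmod.const_mul hq).add ((hsq.sub (powSum_neg_two_congr_zero hpn hp3)).const_mul
      (mul_mem (ofNat_mem _ 3) (pow_mem (two_inv_mem_pIntegers hp2) 2)))).of_sub_eq ?_
    ring
  exact (harmonic_congr_quadratic hpn hp2).trans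
    ((ratCongr.refl _).add (ratCongr.natCast_mul_iff.2 hbracket))

end HalfProduct

section Convolution

lemma harmonic_sq_add_powSum_neg_two (N : ℕ) :
    harmonic N ^ 2 + powSum (-2) N = 2 * ∑ k ∈ Icc 1 N, harmonic k / k := by
  induction N with
  | zero => simp [powSum]
  | succ N ih =>
    rw [sum_Icc_succ_top (Nat.le_add_left 1 N), mul_add, ← ih, powSum_succ, harmonic_succ,
      zpow_neg, zpow_ofNat]
    push_cast
    field_simp
    ring

lemma sum_range_inv_mul_inv_sub (N : ℕ) :
    ∑ k ∈ range N, ((k : ℚ) + 1)⁻¹ * ((N : ℚ) - k)⁻¹ = 2 * harmonic N / (N + 1) := by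
  have hreflect : ∑ k ∈ range N, ((N : ℚ) - k)⁻¹ = harmonic N := by
    rw [harmonic, ← sum_range_reflect]
    refine sum_congr rfl fun k hk => ?_
    rw [Nat.sub_sub, Nat.add_comm, Nat.cast_sub (Nat.succ_le_of_lt (mem_range.1 hk)),
      sub_sub_cancel, Nat.cast_succ]
  rw [eq_div_iff (by positivity), two_mul, sum_mul]
  nth_rw 1 [← hreflect, harmonic]
  rw [← sum_add_distrib]
  refine sum_congr rfl fun k hk => ?_
  have hk : (N : ℚ) - k ≠ 0 := sub_ne_zero.2 (Nat.cast_lt.2 (mem_range.1 hk)).ne'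
  push_cast
  field_simp
  ring

lemma sum_range_harmonic_div_sub (N : ℕ) :
    ∑ k ∈ range N, harmonic k / ((N : ℚ) - k) = harmonic N ^ 2 - powSum (-2) N := by
  induction N with
  | zero => simp [powSum]
  | succ N ih =>
    have hstep (k : ℕ) : harmonic (k + 1) / (((N + 1 : ℕ) : ℚ) - (k + 1 : ℕ)) =
        harmonic k / ((N : ℚ) - k) + ((k : ℚ) + 1)⁻¹ * ((N : ℚ) - k)⁻¹ := by
      rw [harmonic_succ]
      push_cast
      ring
    rw [sum_range_succ', harmonic_zero, zero_div, add_zero, sum_congr rfl fun k _ => hstep k,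
      sum_add_distrib, ih, sum_range_inv_mul_inv_sub, powSum_succ, harmonic_succ, zpow_neg,
      zpow_ofNat]
    push_cast
    field_simp
    ring

lemma sum_Icc_harmonic_div_succ_sub (N : ℕ) :
    ∑ k ∈ Icc 1 N, harmonic k / ((N : ℚ) + 1 - k) =
      harmonic N ^ 2 + 2 * harmonic N / (N + 1) - powSum (-2) N := by
  have h := sum_range_harmonic_div_sub (N + 1)
  rw [sum_range_eq_add_Ico _ N.add_one_pos, harmonic_zero, zero_div, zero_add,
    Ico_add_one_right_eq_Icc, powSum_succ, harmonic_succ, zpow_neg, zpow_ofNat] at h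
  push_cast at h
  rw [h]
  field_simp
  ring

end Convolution

section HarmonicSum

variable {p n : ℕ}

lemma sum_mul_div_eq_partialFractions (hpn : p = 2 * n + 1) (f : ℕ → ℚ) :
    4 * ∑ k ∈ Icc 1 n, ((p : ℚ) / 2 - k) * f k / (((p : ℚ) + 1 - 2 * k) * ((p : ℚ) + 2 * k)) =
      (1 + p * 2 : ℚ)⁻¹ *
        (4 * (p * ∑ k ∈ Icc 1 n, f k / (p + 2 * k)) - ∑ k ∈ Icc 1 n, f k / ((n : ℚ) + 1 - k)) := by
  rw [mul_sum, mul_sum, mul_sum, ← sum_sub_distrib, mul_sum]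
  refine sum_congr rfl fun k hk => ?_
  have hkn : (k : ℚ) ≤ n := Nat.cast_le.2 (mem_Icc.1 hk).2
  have hp : (p : ℚ) = 2 * n + 1 := mod_cast hpn
  have hsub : (n : ℚ) + 1 - k ≠ 0 := by linarith
  have hadd : (p : ℚ) + 2 * k ≠ 0 := by rw [hp]; positivity
  rw [show (p : ℚ) + 1 - 2 * k = 2 * (n + 1 - k) by rw [hp]; ring]
  field_simp
  rw [hp]
  ring

variable [Fact p.Prime]

lemma sum_harmonic_div_add_congr (hpn : p = 2 * n + 1) (hp3 : 3 < p) :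
    ratCongr p 1 (∑ k ∈ Icc 1 n, harmonic k / ((p : ℚ) + 2 * k)) (fermatQ p ^ 2) := by
  have hH : harmonic n ∈ pIntegers p := harmonic_mem_pIntegers (by omega)
  have hq : fermatQ p ∈ pIntegers p := fermatQ_mem_pIntegers (by omega)
  have hterms : ratCongr p 1 (∑ k ∈ Icc 1 n, harmonic k / ((p : ℚ) + 2 * k))
      (∑ k ∈ Icc 1 n, 2⁻¹ * (harmonic k / k)) := by
    refine .sum fun k hk => ?_
    obtain ⟨hk1, hkn⟩ := mem_Icc.1 hk
    have hinv := natCast_add_inv_congr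
      (Nat.not_dvd_of_pos_of_lt (by omega : 0 < 2 * k) (by omega : 2 * k < p))
    refine (hinv.const_mul (harmonic_mem_pIntegers (by omega : k < p))).of_sub_eq ?_
    push_cast
    ring
  have hsq : ratCongr p 1 (2⁻¹ ^ 2 * (harmonic n ^ 2 + powSum (-2) n)) (fermatQ p ^ 2) := by
    have hmod := harmonic_congr_neg_two_mul_fermatQ hpn (by omega)
    have hmul := hmod.mul hmod (mul_mem (neg_mem (ofNat_mem _ 2)) hq) hH
    refine ((hmul.add (powSum_neg_two_congr_zero hpn hp3)).const_mul
      (pow_mem (two_inv_mem_pIntegers (by omega)) 2)).of_sub_eq ?_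
    ring
  refine hterms.trans (hsq.of_sub_eq ?_)
  rw [← mul_sum, harmonic_sq_add_powSum_neg_two]
  ring

lemma sum_harmonic_div_succ_sub_congr (hpn : p = 2 * n + 1) (hp3 : 3 < p) :
    ratCongr p 2 (∑ k ∈ Icc 1 n, harmonic k / ((n : ℚ) + 1 - k))
      (4 * (fermatQ p ^ 2 - 2 * fermatQ p +
        p * (fermatQ p ^ 2 + 2 * fermatQ p - fermatQ p ^ 3)) - powSum (-2) n) := by
  have hq : fermatQ p ∈ pIntegers p := fermatQ_mem_pIntegers (by omega)
  have hH : harmonic n ∈ pIntegers p := harmonic_mem_pIntegers (by omega)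
  have hmod := harmonic_congr hpn hp3
  have hval : -2 * fermatQ p + p * fermatQ p ^ 2 ∈ pIntegers p :=
    add_mem (mul_mem (neg_mem (ofNat_mem _ 2)) hq) (mul_mem (natCast_mem _ _) (pow_mem hq 2))
  have hsq := hmod.mul hmod hval hH
  have hdiv := (hmod.mul (inv_one_add_mul_congr (one_mem _)) hval
    (inv_one_add_mul_mem_pIntegers (one_mem _))).const_mul (ofNat_mem _ 4)
  have herror : fermatQ p ^ 4 - 4 * fermatQ p ^ 2 ∈ pIntegers p :=
    sub_mem (pow_mem hq 4) (mul_mem (ofNat_mem _ 4) (pow_mem hq 2))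
  have hdenom : 2 * harmonic n / (n + 1 : ℚ) = 4 * (harmonic n * (1 + p * 1 : ℚ)⁻¹) := by
    rw [hpn]
    push_cast
    field_simp
    ring
  rw [sum_Icc_harmonic_div_succ_sub, hdenom]
  refine ((hsq.add hdiv).add (ratCongr.mul_pow_zero herror 2)).of_sub_eq ?_
  ring

lemma sum_mul_harmonic_div_congr (hpn : p = 2 * n + 1) (hp3 : 3 < p) :
    ratCongr p 2
      (∑ k ∈ Icc 1 n, ((p : ℚ) / 2 - k) * harmonic k / (((p : ℚ) + 1 - 2 * k) * (p + 2 * k)))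
      (2 * fermatQ p - fermatQ p ^ 2 - 6 * p * fermatQ p + 2 * p * fermatQ p ^ 2 +
        p * fermatQ p ^ 3 + 2⁻¹ ^ 2 * powSum (-2) n) := by
  have h4 : ¬ p ∣ 4 := fun h =>
    Nat.not_dvd_of_pos_of_lt two_pos (by omega) ((Fact.out : p.Prime).dvd_of_dvd_pow (n := 2) h)
  have hq : fermatQ p ∈ pIntegers p := fermatQ_mem_pIntegers (by omega)
  have hq2 := pow_mem hq 2
  have h2q : 2 * fermatQ p ∈ pIntegers p := mul_mem (ofNat_mem _ 2) hq
  have hS := powSum_mem_pIntegers (p := p) (n := n) (-2) (by omega)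
  have hp : (p : ℚ) ∈ pIntegers p := natCast_mem _ _
  have hbracket := ((ratCongr.natCast_mul_iff.2 (sum_harmonic_div_add_congr hpn hp3)).const_mul
    (ofNat_mem _ 4)).sub (sum_harmonic_div_succ_sub_congr hpn hp3)
  have hprod := hbracket.mul (inv_one_add_mul_congr (ofNat_mem _ 2))
    (sub_mem (mul_mem (ofNat_mem _ 4) (mul_mem hp hq2))
      (sub_mem (mul_mem (ofNat_mem _ 4) (add_mem (sub_mem hq2 h2q)
        (mul_mem hp (sub_mem (add_mem hq2 h2q) (pow_mem hq 3))))) hS))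
    (inv_one_add_mul_mem_pIntegers (ofNat_mem _ 2))
  have hvanish := ratCongr.natCast_mul_iff.2 (powSum_neg_two_congr_zero hpn hp3)
  have herror : 8 * (2 * fermatQ p - fermatQ p ^ 3) ∈ pIntegers p :=
    mul_mem (ofNat_mem _ 8) (sub_mem h2q (pow_mem hq 3))
  refine .of_natCast_mul h4 ?_
  rw [Nat.cast_ofNat, sum_mul_div_eq_partialFractions hpn, mul_comm]
  refine ((hprod.sub (hvanish.const_mul (ofNat_mem _ 2))).add
    (ratCongr.mul_pow_zero herror 2)).of_sub_eq ?_
  ring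

end HarmonicSum

theorem sum_Hk_congr (p : ℕ) (hp : p.Prime) (hp3 : 3 < p) :
    ratCongr p 2
      (∑ k ∈ Finset.Icc 1 ((p - 1) / 2),
        ((p : ℚ) / 2 - k) * harmonic k / (((p : ℚ) + 1 - 2 * k) * ((p : ℚ) + 2 * k)))
      (2 * fermatQ p - fermatQ p ^ 2 - 6 * p * fermatQ p + 2 * p * fermatQ p ^ 2 +
        p * fermatQ p ^ 3 + (7 / 12) * p * bernoulli (p - 3)) := by
  have := Fact.mk hp
  obtain ⟨n, hpn⟩ := hp.odd_of_ne_two (by omega)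
  rw [show (p - 1) / 2 = n by omega]
  have hsum := sum_mul_harmonic_div_congr hpn hp3
  have hpowSum := (powSum_neg_two_congr hpn hp3).const_mul
    (pow_mem (two_inv_mem_pIntegers (by omega)) 2)
  exact (hsum.add hpowSum).of_sub_eq (by ring)
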